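/- arXiv:2202.09178 — 3 statements merged into one kernel-verified Lean document; each statement's English description precedes it below -/
import Mathlib

section
/- For all sufficiently small τ ∈ (0,1), there exists a constant C ∈ (0,1) such that for all sufficiently small R > 0, all z ∈ ℝ, and all k ∈ ℕ with τ^k < C·R², one has N(z,R,k,τ) ≈ τ^{-k}·R, where the implicit constants in ≈ depend only on τ (and not on z, R, k). More precisely: there exists τ₀ ∈ (0,1) such that for every τ ∈ (0,τ₀) there exist C ∈ (0,1), constants 0 < a ≤ b and R₀ > 0 such that for all R ∈ (0,R₀), all z ∈ ℝ, and all k ∈ ℕ with τ^k < C·R², one has a·τ^{-k}·R ≤ N(z,R,k,τ) ≤ b·τ^{-k}·R. -/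
/-- `N z R τ k` is the number of reduced rationals `p/q` (with `p ∈ ℤ`, `q ∈ ℕ`,
`gcd(p,q) = 1`) whose denominator satisfies `τ⁻ᵏ < q² ≤ τ⁻⁽ᵏ⁺¹⁾` and which lie
within distance `R` of `z`. -/
noncomputable def ratCount (z R τ : ℝ) (k : ℕ) : ℕ :=
  Set.ncard {pq : ℤ × ℕ |
    Int.gcd pq.1 pq.2 = 1 ∧
    (τ ^ k)⁻¹ < (pq.2 : ℝ) ^ 2 ∧ (pq.2 : ℝ) ^ 2 ≤ (τ ^ (k + 1))⁻¹ ∧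
    |(pq.1 : ℝ) / (pq.2 : ℝ) - z| ≤ R}

/-!
Distinct rationals `r`, `s` satisfy `|r - s| ≥ 1 / (r.den * s.den)`. Hence, among the rationals of
denominator at most `X`, the balls of radius `1 / (2 * X * r.den)` about `r` are disjoint, whereas
by Dirichlet's theorem the balls of radius `1 / (X * r.den)` cover the line. Comparing lengths in a
window of radius `R`, the weights `1 / r.den` over the window sum to between `R * X - 1` and
`2 * R * X + 1`. For `X ≥ 5 * Q` the lower bound at height `X` beats the upper bound at height `Q`,
so denominators in `(Q, X]` carry a weight of order `R * Q`; as each single weight there is less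
than `1 / Q`, there are at least of order `R * Q ^ 2` of them.
-/

section Window

open MeasureTheory Metric

lemma one_div_den_mul_den_le_abs_sub {r s : ℚ} (hrs : r ≠ s) :
    1 / ((r.den : ℝ) * s.den) ≤ |(r : ℝ) - s| := by
  have hr : (0 : ℝ) < r.den := mod_cast r.den_pos
  have hs : (0 : ℝ) < s.den := mod_cast s.den_pos
  have hne : r.num * s.den - s.num * r.den ≠ 0 :=
    sub_ne_zero.2 (mt Rat.eq_iff_mul_eq_mul.2 hrs)
  have hnum : (1 : ℝ) ≤ |(r.num : ℝ) * s.den - s.num * r.den| := mod_cast Int.one_le_abs hne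
  rw [Rat.cast_def r, Rat.cast_def s, div_sub_div _ _ hr.ne' hs.ne', abs_div,
    abs_of_pos (mul_pos hr hs), mul_comm (r.den : ℝ) s.num]
  gcongr

lemma pairwiseDisjoint_ball_div_den (X : ℝ) :
    {r : ℚ | (r.den : ℝ) ≤ X}.PairwiseDisjoint fun r ↦ ball (r : ℝ) (1 / (2 * X * r.den)) := by
  intro r hrX s hsX hrs
  have hr : (0 : ℝ) < r.den := mod_cast r.den_pos
  have : (0 : ℝ) < s.den := mod_cast s.den_pos
  have hX : 0 < X := hr.trans_le hrX
  refine ball_disjoint_ball ?_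
  calc 1 / (2 * X * r.den) + 1 / (2 * X * s.den)
      = ((r.den + s.den) / (2 * X)) * (1 / (r.den * s.den)) := by field_simp; ring
    _ ≤ 1 * (1 / (r.den * s.den)) := by
        gcongr
        rw [div_le_one (by positivity)]
        linarith [show (r.den : ℝ) ≤ X from hrX, show (s.den : ℝ) ≤ X from hsX]
    _ ≤ dist (r : ℝ) s := by
        rw [one_mul, Real.dist_eq]
        exact one_div_den_mul_den_le_abs_sub hrs

lemma exists_rat_den_le_and_abs_sub_le (ξ : ℝ) {X : ℝ} (hX : 1 ≤ X) :
    ∃ r : ℚ, (r.den : ℝ) ≤ X ∧ |ξ - r| ≤ 1 / (X * r.den) := by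
  obtain ⟨r, happrox, hden⟩ := Real.exists_rat_abs_sub_le_and_den_le ξ (Nat.floor_pos.2 hX)
  refine ⟨r, (Nat.le_floor_iff (by positivity)).1 hden, happrox.trans ?_⟩
  have : (0 : ℝ) < r.den := mod_cast r.den_pos
  gcongr
  exact (Nat.lt_floor_add_one X).le

lemma injective_num_den : Function.Injective fun r : ℚ ↦ (r.num, r.den) :=
  fun _ _ h ↦ Rat.ext (congrArg Prod.fst h) (congrArg Prod.snd h)

lemma finite_setOf_den_le_and_abs_sub_le (z R X : ℝ) :
    {r : ℚ | (r.den : ℝ) ≤ X ∧ |(r : ℝ) - z| ≤ R}.Finite := by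
  set B : ℝ := (|z| + R) * X
  refine Set.Finite.of_injOn (t := Set.Icc ⌈-B⌉ ⌊B⌋ ×ˢ Set.Iic ⌊X⌋₊) ?_ injective_num_den.injOn
    ((Set.finite_Icc _ _).prod (Set.finite_Iic _))
  rintro r ⟨hden, hdist⟩
  have hr : (0 : ℝ) < r.den := mod_cast r.den_pos
  have hnum : |(r.num : ℝ)| ≤ B := by
    have habs : |(r : ℝ)| ≤ |z| + R := by
      linarith [abs_sub_abs_le_abs_sub (r : ℝ) z]
    calc |(r.num : ℝ)| = |(r : ℝ)| * r.den := by
          rw [Rat.cast_def, abs_div, abs_of_pos hr, div_mul_cancel₀ _ hr.ne']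
      _ ≤ B := mul_le_mul habs hden hr.le ((abs_nonneg _).trans habs)
  exact ⟨⟨Int.ceil_le.2 (abs_le.1 hnum).1, Int.le_floor.2 (abs_le.1 hnum).2⟩, Nat.le_floor hden⟩

/-- The Farey fractions of order `X` in a window: the rationals of denominator at most `X` within
distance `R` of `z`. The order is real, so that square roots can be used without rounding. -/
noncomputable def fareyWindow (z R X : ℝ) : Finset ℚ :=
  (finite_setOf_den_le_and_abs_sub_le z R X).toFinset

variable {z R Q X : ℝ}

lemma mem_fareyWindow {r : ℚ} :
    r ∈ fareyWindow z R X ↔ (r.den : ℝ) ≤ X ∧ |(r : ℝ) - z| ≤ R := by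
  simp [fareyWindow]

lemma fareyWindow_mono (hQX : Q ≤ X) : fareyWindow z R Q ⊆ fareyWindow z R X := fun _ hr ↦
  mem_fareyWindow.2 ((mem_fareyWindow.1 hr).imp_left (le_trans · hQX))

lemma mem_fareyWindow_sdiff {r : ℚ} :
    r ∈ fareyWindow z R X \ fareyWindow z R Q ↔
      Q < r.den ∧ (r.den : ℝ) ≤ X ∧ |(r : ℝ) - z| ≤ R := by
  rw [Finset.mem_sdiff, mem_fareyWindow, mem_fareyWindow, ← not_le]
  tauto

lemma sum_one_div_den_fareyWindow_le (hR : 0 ≤ R) (hX : 0 < X) :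
    ∑ r ∈ fareyWindow z R X, 1 / (r.den : ℝ) ≤ 2 * R * X + 1 := by
  have hsub : ⋃ r ∈ fareyWindow z R X, ball (r : ℝ) (1 / (2 * X * r.den)) ⊆
      closedBall z (R + 1 / (2 * X)) := by
    refine Set.iUnion₂_subset fun r hr ↦
      ball_subset_closedBall.trans (closedBall_subset_closedBall' ?_)
    have hrad : 1 / (2 * X * r.den) ≤ 1 / (2 * X) :=
      one_div_le_one_div_of_le (by positivity)
        (le_mul_of_one_le_right (by positivity) (mod_cast r.den_pos))
    rw [Real.dist_eq]
    linarith [(mem_fareyWindow.1 hr).2]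
  have hlength : ∑ r ∈ fareyWindow z R X, 2 * (1 / (2 * X * r.den)) ≤ 2 * (R + 1 / (2 * X)) := by
    have hvol := measureReal_mono (μ := volume) hsub measure_closedBall_lt_top.ne
    rw [measureReal_biUnion_finset
        ((pairwiseDisjoint_ball_div_den X).subset fun r hr ↦ (mem_fareyWindow.1 hr).1)
        fun _ _ ↦ measurableSet_ball,
      Real.volume_real_closedBall (by positivity)] at hvol
    simpa only [Real.volume_real_ball
      (show 0 ≤ 1 / (2 * X * (_ : ℚ).den) by positivity)] using hvol
  calc ∑ r ∈ fareyWindow z R X, 1 / (r.den : ℝ)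
      = X * ∑ r ∈ fareyWindow z R X, 2 * (1 / (2 * X * r.den)) := by
        rw [Finset.mul_sum]
        exact Finset.sum_congr rfl fun r _ ↦ by field_simp
    _ ≤ X * (2 * (R + 1 / (2 * X))) := by gcongr
    _ = 2 * R * X + 1 := by field_simp

lemma closedBall_subset_biUnion_fareyWindow (hX : 1 ≤ X) :
    closedBall z (R - 1 / X) ⊆ ⋃ r ∈ fareyWindow z R X, closedBall (r : ℝ) (1 / (X * r.den)) := by
  intro ξ hξ
  obtain ⟨r, hden, happrox⟩ := exists_rat_den_le_and_abs_sub_le ξ hX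
  have hrad : 1 / (X * r.den) ≤ 1 / X :=
    one_div_le_one_div_of_le (by positivity)
      (le_mul_of_one_le_right (by positivity) (mod_cast r.den_pos))
  rw [mem_closedBall, Real.dist_eq] at hξ
  refine Set.mem_iUnion₂.2 ⟨r, mem_fareyWindow.2 ⟨hden, ?_⟩, happrox⟩
  linarith [abs_sub_le (r : ℝ) ξ z, abs_sub_comm (r : ℝ) ξ]

lemma le_sum_one_div_den_fareyWindow (hX : 1 ≤ X) :
    R * X - 1 ≤ ∑ r ∈ fareyWindow z R X, 1 / (r.den : ℝ) := by
  have hlength : 2 * (R - 1 / X) ≤ ∑ r ∈ fareyWindow z R X, 2 * (1 / (X * r.den)) := by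
    calc 2 * (R - 1 / X) ≤ volume.real (closedBall z (R - 1 / X)) := by
          rw [Real.closedBall_eq_Icc, Real.volume_real_Icc]
          exact le_max_of_le_left (by linarith)
      _ ≤ volume.real (⋃ r ∈ fareyWindow z R X, closedBall (r : ℝ) (1 / (X * r.den))) :=
          measureReal_mono (closedBall_subset_biUnion_fareyWindow hX)
            (measure_biUnion_lt_top (Finset.finite_toSet _) fun _ _ ↦ measure_closedBall_lt_top).ne
      _ ≤ ∑ r ∈ fareyWindow z R X, volume.real (closedBall (r : ℝ) (1 / (X * r.den))) :=
          measureReal_biUnion_finset_le _ _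
      _ = ∑ r ∈ fareyWindow z R X, 2 * (1 / (X * r.den)) :=
          Finset.sum_congr rfl fun r _ ↦ Real.volume_real_closedBall (by positivity)
  calc R * X - 1 = X / 2 * (2 * (R - 1 / X)) := by field_simp
    _ ≤ X / 2 * ∑ r ∈ fareyWindow z R X, 2 * (1 / (X * r.den)) := by gcongr
    _ = ∑ r ∈ fareyWindow z R X, 1 / (r.den : ℝ) := by
        rw [Finset.mul_sum]
        exact Finset.sum_congr rfl fun r _ ↦ by field_simp

lemma card_fareyWindow_le (hR : 0 ≤ R) (hX : 0 < X) :
    ((fareyWindow z R X).card : ℝ) ≤ X * (2 * R * X + 1) := by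
  have hcard : (fareyWindow z R X).card * (1 / X) ≤ ∑ r ∈ fareyWindow z R X, 1 / (r.den : ℝ) := by
    rw [← nsmul_eq_mul]
    refine Finset.card_nsmul_le_sum _ _ _ fun r hr ↦ ?_
    exact one_div_le_one_div_of_le (mod_cast r.den_pos) (mem_fareyWindow.1 hr).1
  rw [mul_one_div, div_le_iff₀' hX] at hcard
  exact hcard.trans (by gcongr; exact sum_one_div_den_fareyWindow_le hR hX)

lemma le_card_fareyWindow_sdiff (hR : 0 ≤ R) (hQ : 0 < Q) (hQX : Q ≤ X) (hX : 1 ≤ X) :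
    Q * (R * (X - 2 * Q) - 2) ≤ ((fareyWindow z R X \ fareyWindow z R Q).card : ℝ) := by
  have hcard : ∑ r ∈ fareyWindow z R X \ fareyWindow z R Q, 1 / (r.den : ℝ) ≤
      (fareyWindow z R X \ fareyWindow z R Q).card * (1 / Q) := by
    rw [← nsmul_eq_mul]
    refine Finset.sum_le_card_nsmul _ _ _ fun r hr ↦ ?_
    exact one_div_le_one_div_of_le hQ (mem_fareyWindow_sdiff.1 hr).1.le
  have hsplit := Finset.sum_sdiff (f := fun r : ℚ ↦ 1 / (r.den : ℝ))
    (fareyWindow_mono (z := z) (R := R) hQX)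
  have hlower := le_sum_one_div_den_fareyWindow (z := z) (R := R) hX
  have hupper := sum_one_div_den_fareyWindow_le (z := z) hR hQ
  rw [mul_one_div] at hcard
  rw [← le_div_iff₀' hQ]
  linarith

end Window

section Count

variable {τ R : ℝ} {k : ℕ}

lemma ratCount_eq_card (z R : ℝ) (hτ : 0 ≤ τ) (k : ℕ) :
    ratCount z R τ k =
      (fareyWindow z R √(τ ^ (k + 1))⁻¹ \ fareyWindow z R √(τ ^ k)⁻¹).card := by
  rw [← Set.ncard_coe_finset, ← Set.ncard_image_of_injective _ injective_num_den, ratCount]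
  congr 1
  ext ⟨p, q⟩
  simp only [Set.mem_ofPred_eq, Set.mem_image, Finset.mem_coe, mem_fareyWindow_sdiff,
    Prod.mk_inj]
  constructor
  · rintro ⟨hgcd, hlt, hle, hdist⟩
    have hq : q ≠ 0 := by
      rintro rfl
      rw [Nat.cast_zero, zero_pow two_ne_zero] at hlt
      exact hlt.not_ge (by positivity)
    refine ⟨⟨p, q, hq, hgcd⟩, ⟨?_, Real.le_sqrt_of_sq_le hle, ?_⟩, rfl, rfl⟩
    · exact (Real.sqrt_lt' (by positivity)).2 hlt
    · rwa [Rat.cast_def]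
  · rintro ⟨r, ⟨hlt, hle, hdist⟩, rfl, rfl⟩
    have hr : (0 : ℝ) < r.den := mod_cast r.den_pos
    exact ⟨r.reduced, (Real.sqrt_lt' hr).1 hlt, (Real.le_sqrt' hr).1 hle, by rwa [← Rat.cast_def]⟩

lemma one_le_mul_sqrt_inv {x : ℝ} (hx : 0 < x) (hR : 0 < R) (hxR : x ≤ R ^ 2) :
    1 ≤ R * √x⁻¹ := by
  rw [← inv_le_iff_one_le_mul₀' hR]
  exact Real.le_sqrt_of_sq_le (by rw [inv_pow]; exact inv_anti₀ hx hxR)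

lemma ratCount_le (hτ : 0 < τ) (hR : 0 < R) (z : ℝ) (hk : τ ^ (k + 1) ≤ R ^ 2) :
    (ratCount z R τ k : ℝ) ≤ 3 * (τ ^ (k + 1))⁻¹ * R := by
  have hτk : 0 < τ ^ (k + 1) := pow_pos hτ _
  set X := √(τ ^ (k + 1))⁻¹ with hX
  have hX0 : 0 < X := Real.sqrt_pos.2 (inv_pos.2 hτk)
  calc (ratCount z R τ k : ℝ) ≤ (fareyWindow z R X).card := by
        rw [ratCount_eq_card z R hτ.le k]
        exact mod_cast Finset.card_le_card Finset.sdiff_subset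
    _ ≤ X * (2 * R * X + 1) := card_fareyWindow_le hR.le hX0
    _ ≤ X * (2 * R * X + R * X) := by gcongr; exact one_le_mul_sqrt_inv hτk hR hk
    _ = 3 * X ^ 2 * R := by ring
    _ = 3 * (τ ^ (k + 1))⁻¹ * R := by rw [hX, Real.sq_sqrt (by positivity)]

lemma le_ratCount (hτ : τ ∈ Set.Ioc (0 : ℝ) (1 / 25)) (hR : 0 < R) (z : ℝ)
    (hk : τ ^ k ≤ R ^ 2) : (τ ^ k)⁻¹ * R ≤ (ratCount z R τ k : ℝ) := by
  obtain ⟨hτ0, hτ1⟩ := hτ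
  have hτk : 0 < τ ^ k := pow_pos hτ0 k
  set Q := √(τ ^ k)⁻¹
  set X := √(τ ^ (k + 1))⁻¹
  have hQsq : Q ^ 2 = (τ ^ k)⁻¹ := Real.sq_sqrt (by positivity)
  have hQ : 1 ≤ Q := Real.one_le_sqrt.2 ((one_le_inv₀ hτk).2 (pow_le_one₀ hτ0.le (by linarith)))
  have hRQ : 1 ≤ R * Q := one_le_mul_sqrt_inv hτk hR hk
  have hτinv : 25 ≤ τ⁻¹ := (le_inv_comm₀ (by norm_num) hτ0).2 (by linarith)
  have hQX : 5 * Q ≤ X := by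
    refine Real.le_sqrt_of_sq_le ?_
    calc (5 * Q) ^ 2 = 25 * (τ ^ k)⁻¹ := by rw [mul_pow, hQsq]; norm_num
      _ ≤ τ⁻¹ * (τ ^ k)⁻¹ := by gcongr
      _ = (τ ^ (k + 1))⁻¹ := by rw [pow_succ', mul_inv]
  have hRX : 5 * (R * Q) ≤ R * X := by
    calc 5 * (R * Q) = R * (5 * Q) := by ring
      _ ≤ R * X := by gcongr
  calc (τ ^ k)⁻¹ * R = Q * (R * Q) := by rw [← hQsq]; ring
    _ ≤ Q * (R * (X - 2 * Q) - 2) := by gcongr; linarith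
    _ ≤ (fareyWindow z R X \ fareyWindow z R Q).card :=
        le_card_fareyWindow_sdiff hR.le (by linarith) (by linarith) (by linarith)
    _ = ratCount z R τ k := by rw [ratCount_eq_card z R hτ0.le k]

theorem localCountingRationals_general (hτ : τ ∈ Set.Ioc (0 : ℝ) (1 / 25)) (hR : 0 < R) (z : ℝ)
    (hk : τ ^ k ≤ R ^ 2) :
    (τ ^ k)⁻¹ * R ≤ (ratCount z R τ k : ℝ) ∧
      (ratCount z R τ k : ℝ) ≤ 3 * τ⁻¹ * (τ ^ k)⁻¹ * R := by
  have hk' : τ ^ (k + 1) ≤ R ^ 2 :=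
    (pow_le_pow_of_le_one hτ.1.le (by linarith [hτ.2]) k.le_succ).trans hk
  refine ⟨le_ratCount hτ hR z hk, (ratCount_le hτ.1 hR z hk').trans_eq ?_⟩
  rw [pow_succ', mul_inv, mul_assoc 3 τ⁻¹]

end Count

/-- For all sufficiently small `τ ∈ (0,1)` there exists `C ∈ (0,1)` such that for all
sufficiently small `R > 0`, all `z ∈ ℝ` and all `k ∈ ℕ` with `τ^k < C·R²`, the count
`N(z,R,k,τ)` is comparable to `τ⁻ᵏ·R`, with comparability constants depending only on `τ`. -/
theorem localCountingRationals :
    ∃ τ₀ ∈ Set.Ioo (0 : ℝ) 1, ∀ τ ∈ Set.Ioo (0 : ℝ) τ₀,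
      ∃ C ∈ Set.Ioo (0 : ℝ) 1, ∃ a b R₀ : ℝ, 0 < a ∧ a ≤ b ∧ 0 < R₀ ∧
        ∀ R ∈ Set.Ioo (0 : ℝ) R₀, ∀ z : ℝ, ∀ k : ℕ, τ ^ k < C * R ^ 2 →
          a * (τ ^ k)⁻¹ * R ≤ (ratCount z R τ k : ℝ) ∧
          (ratCount z R τ k : ℝ) ≤ b * (τ ^ k)⁻¹ * R := by
  refine ⟨1 / 25, by norm_num, fun τ hτ ↦ ⟨1 / 2, by norm_num, 1, 3 * τ⁻¹, 1, one_pos, ?_, one_pos,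
    fun R hR z k hk ↦ ?_⟩⟩
  · linarith [(one_le_inv₀ hτ.1).2 (hτ.2.le.trans (by norm_num))]
  · rw [one_mul]
    exact localCountingRationals_general ⟨hτ.1, hτ.2.le⟩ hR.1 z (by linarith [sq_nonneg R])
end

section
/- Let λ ∈ (1,2], c ≥ 1, z ∈ ℝ, and R > 0. If there exist coprime p₀ ∈ ℤ and q₀ ∈ ℕ such that c·R^λ/q₀² ≥ c²·R^{2λ} + (|z − p₀/q₀| + R)², then the set {(p,q) ∈ ℤ × ℕ : gcd(p,q) = 1, |p/q − z| ≤ R, c·R^λ ≤ 1/q²} has at most one element. -/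
/-!
Two distinct fractions with denominators `q` and `q₀` are at least `1 / (q * q₀)` apart. If `p / q`
lies within `R` of `z` and `Y ≤ 1 / q ^ 2`, then `p / q` is within `|z - p₀ / q₀| + R` of `p₀ / q₀`,
and `(|z - p₀ / q₀| + R) ^ 2 < Y / q₀ ^ 2` makes this distance smaller than `1 / (q * q₀)`. Hence
`p / q = p₀ / q₀`: every element of the set is the reduced form of the one fraction `p₀ / q₀`.
For `Y = c * R ^ lam` the positive term `c ^ 2 * R ^ (2 * lam)` makes the inequality strict.
-/

theorem intCast_div_natCast_inj_of_gcd_eq_one {K : Type*} [DivisionRing K] [CharZero K]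
    {p p' : ℤ} {q q' : ℕ} (hq : 0 < q) (hq' : 0 < q') (hpq : Int.gcd p q = 1)
    (hpq' : Int.gcd p' q' = 1) (h : (p : K) / q = p' / q') : p = p' ∧ q = q' := by
  have h_rat : (p : ℚ) / (q : ℤ) = (p' : ℚ) / (q' : ℤ) := by exact_mod_cast h
  exact_mod_cast Rat.div_int_inj (mod_cast hq) (mod_cast hq') hpq hpq' h_rat

section LinearOrderedField

variable {K : Type*} [Field K] [LinearOrder K] [IsStrictOrderedRing K]

theorem one_div_mul_le_abs_div_sub_div {p p₀ : ℤ} {q q₀ : ℕ} (hq : 0 < q) (hq₀ : 0 < q₀)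
    (hne : (p : K) / q ≠ p₀ / q₀) : 1 / ((q : K) * q₀) ≤ |(p : K) / q - p₀ / q₀| := by
  have hqK : (0 : K) < q := mod_cast hq
  have hq₀K : (0 : K) < q₀ := mod_cast hq₀
  have hcross : p * q₀ - q * p₀ ≠ 0 := by
    rw [ne_eq, div_eq_div_iff hqK.ne' hq₀K.ne'] at hne
    rw [sub_ne_zero, mul_comm (q : ℤ)]
    exact_mod_cast hne
  have hone : (1 : K) ≤ |(p : K) * q₀ - q * p₀| := mod_cast Int.one_le_abs hcross
  rw [div_sub_div _ _ hqK.ne' hq₀K.ne', abs_div, abs_of_pos (mul_pos hqK hq₀K)]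
  gcongr

theorem div_eq_div_of_sq_abs_sub_add_lt {p p₀ : ℤ} {q q₀ : ℕ} {Y z R : K}
    (hq : 0 < q) (hq₀ : 0 < q₀)
    (hY : (|z - p₀ / q₀| + R) ^ 2 < Y / (q₀ : K) ^ 2) (hdist : |(p : K) / q - z| ≤ R)
    (hden : Y ≤ 1 / (q : K) ^ 2) : (p : K) / q = p₀ / q₀ := by
  by_contra hne
  refine (one_div_mul_le_abs_div_sub_div hq hq₀ hne).not_gt ?_
  have hsq : (|z - p₀ / q₀| + R) ^ 2 < (1 / ((q : K) * q₀)) ^ 2 :=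
    calc (|z - p₀ / q₀| + R) ^ 2 < Y / (q₀ : K) ^ 2 := hY
      _ ≤ 1 / (q : K) ^ 2 / (q₀ : K) ^ 2 := by gcongr
      _ = (1 / ((q : K) * q₀)) ^ 2 := by rw [div_div, one_div_pow, mul_pow]
  calc |(p : K) / q - p₀ / q₀| ≤ |(p : K) / q - z| + |z - p₀ / q₀| := abs_sub_le _ _ _
    _ ≤ |z - p₀ / q₀| + R := by linarith
    _ < 1 / ((q : K) * q₀) := lt_of_pow_lt_pow_left₀ 2 (by positivity) hsq

theorem proximityRationals_general {p₀ : ℤ} {q₀ : ℕ} {Y z R : K} (hq₀ : 0 < q₀)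
    (hY : (|z - p₀ / q₀| + R) ^ 2 < Y / (q₀ : K) ^ 2) :
    {pq : ℤ × ℕ | Int.gcd pq.1 pq.2 = 1 ∧
      |(pq.1 : K) / (pq.2 : K) - z| ≤ R ∧
      Y ≤ 1 / (pq.2 : K) ^ 2}.Subsingleton := by
  have hY_pos : 0 < Y :=
    (div_pos_iff_of_pos_right (by positivity)).mp ((sq_nonneg _).trans_lt hY)
  -- `1 / 0 = 0`, so `0 < Y ≤ 1 / q ^ 2` rules out `q = 0`.
  have den_pos {q : ℕ} (hden : Y ≤ 1 / (q : K) ^ 2) : 0 < q := by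
    rw [Nat.pos_iff_ne_zero]
    rintro rfl
    exact hY_pos.not_ge (by simpa using hden)
  rintro ⟨p, q⟩ ⟨hpq, hdist, hden⟩ ⟨p', q'⟩ ⟨hpq', hdist', hden'⟩
  have hq := den_pos hden
  have hq' := den_pos hden'
  have heq : (p : K) / q = p' / q' :=
    (div_eq_div_of_sq_abs_sub_add_lt hq hq₀ hY hdist hden).trans
      (div_eq_div_of_sq_abs_sub_add_lt hq' hq₀ hY hdist' hden').symm
  exact Prod.ext_iff.mpr (intCast_div_natCast_inj_of_gcd_eq_one hq hq' hpq hpq' heq)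

end LinearOrderedField

/-- Proximity theorem for the modular group: if `λ ∈ (1,2]`, `c ≥ 1`, `z ∈ ℝ`, `R > 0`
and there exist coprime `p₀ ∈ ℤ`, `q₀ ∈ ℕ` with
`c·R^λ/q₀² ≥ c²·R^{2λ} + (|z − p₀/q₀| + R)²`, then there is at most one reduced pair
`(p,q)` with `|p/q − z| ≤ R` and `c·R^λ ≤ 1/q²`. -/
theorem proximityRationals (lam c z R : ℝ)
    (hlam : lam ∈ Set.Ioc (1 : ℝ) 2) (hc : 1 ≤ c) (hR : 0 < R)
    (h : ∃ p₀ : ℤ, ∃ q₀ : ℕ, 0 < q₀ ∧ Int.gcd p₀ q₀ = 1 ∧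
      c * R ^ lam / (q₀ : ℝ) ^ 2 ≥
        c ^ 2 * R ^ (2 * lam) + (|z - (p₀ : ℝ) / (q₀ : ℝ)| + R) ^ 2) :
    {pq : ℤ × ℕ | Int.gcd pq.1 pq.2 = 1 ∧
      |(pq.1 : ℝ) / (pq.2 : ℝ) - z| ≤ R ∧
      c * R ^ lam ≤ 1 / (pq.2 : ℝ) ^ 2}.Subsingleton := by
  obtain ⟨p₀, q₀, hq₀, -, h⟩ := h
  exact proximityRationals_general hq₀ ((lt_add_of_pos_left _ (by positivity)).trans_le h)
end

section
/- Let (P, D) be a horoball family in ℝ^d × ℝ (d ≥ 1). Let λ ∈ (1,2], c ≥ 1, z ∈ ℝ^d, and R > 0. If there exists p₀ ∈ P with c·D(p₀)·R^λ ≥ c²·R^{2λ} + (‖z − p₀‖ + R)², then the set {p ∈ P : ‖p − z‖ ≤ R and c·R^λ ≤ D(p)} has at most one element. -/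
/-- The horoball tangent to the boundary `ℝᵈ × {0}` at `(p,0)` with (Euclidean)
diameter `D`: the open Euclidean ball of radius `D/2` centred at `(p, D/2)` in
`ℝᵈ × ℝ` with the Euclidean norm. -/
def horoball {d : ℕ} (p : EuclideanSpace ℝ (Fin d)) (D : ℝ) :
    Set (EuclideanSpace ℝ (Fin d) × ℝ) :=
  {x : EuclideanSpace ℝ (Fin d) × ℝ | ‖x.1 - p‖ ^ 2 + (x.2 - D / 2) ^ 2 < (D / 2) ^ 2}

/-!
Two balls of diameters `D` and `E` tangent to a hyperplane at `p` and `q` have centres at squared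
distance `‖p - q‖² + ((D - E) / 2)²`; comparing this with `((D + E) / 2)²`, they are disjoint
exactly when `D * E ≤ ‖p - q‖²`. A horoball of diameter at least `t` based at `p ≠ p₀` within `R`
of `z` therefore forces `t * D p₀ ≤ ‖p - p₀‖² ≤ (‖z - p₀‖ + R)²`. For `t = c * R ^ λ` the
hypothesis on `p₀` excludes this.
-/

open Metric WithLp

section TangentBall

variable {V : Type*} [SeminormedAddCommGroup V]

/-- The horoball of diameter `D` tangent at `(p, 0)`, over an arbitrary seminormed group `V`, as a
metric ball. It lives in `WithLp 2 (V × ℝ)` because `V × ℝ` carries the sup norm, and it is empty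
for `D ≤ 0`, in contrast to `horoball`, which is nonempty for `D < 0`. -/
def tangentBall (p : V) (D : ℝ) : Set (WithLp 2 (V × ℝ)) :=
  ball (toLp 2 (p, D / 2)) (D / 2)

theorem dist_sq_toLp_prodMk (p q : V) (a b : ℝ) :
    dist (toLp 2 (p, a)) (toLp 2 (q, b)) ^ 2 = ‖p - q‖ ^ 2 + (a - b) ^ 2 := by
  rw [prod_dist_eq_of_L2, Real.sq_sqrt (by positivity), dist_eq_norm, Real.dist_eq, sq_abs,
    toLp_fst, toLp_snd, toLp_fst, toLp_snd]

theorem disjoint_tangentBall_iff [NormedSpace ℝ V] {p q : V} {D E : ℝ} (hD : 0 < D) (hE : 0 < E) :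
    Disjoint (tangentBall p D) (tangentBall q E) ↔ D * E ≤ ‖p - q‖ ^ 2 := by
  have hdiff : (D / 2 + E / 2) ^ 2 = D * E + (D / 2 - E / 2) ^ 2 := by ring
  rw [tangentBall, tangentBall, disjoint_ball_ball_iff (half_pos hD) (half_pos hE),
    ← sq_le_sq₀ (by positivity) dist_nonneg, dist_sq_toLp_prodMk, hdiff, add_le_add_iff_right]

theorem proximityHoroballs_general [NormedSpace ℝ V] {P : Set V} {D : V → ℝ}
    (hdisj : P.PairwiseDisjoint fun p => tangentBall p (D p)) {p₀ z : V} {R t : ℝ}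
    (hp₀ : p₀ ∈ P) (ht : 0 < t) (h : (‖z - p₀‖ + R) ^ 2 < t * D p₀) :
    {p ∈ P | ‖p - z‖ ≤ R ∧ t ≤ D p} ⊆ {p₀} := by
  rintro p ⟨hp, hpz, htD⟩
  by_contra hne
  have hD₀ : 0 < D p₀ := pos_of_mul_pos_right ((sq_nonneg _).trans_lt h) ht.le
  have hsep : D p * D p₀ ≤ ‖p - p₀‖ ^ 2 :=
    (disjoint_tangentBall_iff (ht.trans_le htD) hD₀).mp (hdisj hp hp₀ hne)
  have hnear : ‖p - p₀‖ ≤ ‖z - p₀‖ + R := by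
    linarith [norm_sub_le_norm_sub_add_norm_sub p z p₀]
  refine h.not_ge ?_
  calc t * D p₀ ≤ D p * D p₀ := by gcongr
    _ ≤ ‖p - p₀‖ ^ 2 := hsep
    _ ≤ (‖z - p₀‖ + R) ^ 2 := by gcongr

end TangentBall

section Horoball

variable {d : ℕ} {p q : EuclideanSpace ℝ (Fin d)} {D E : ℝ}

theorem horoball_eq_preimage_tangentBall (hD : 0 ≤ D) :
    horoball p D = toLp 2 ⁻¹' tangentBall p D := by
  ext x
  rw [Set.mem_preimage, tangentBall, mem_ball, ← sq_lt_sq₀ dist_nonneg (by positivity),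
    dist_sq_toLp_prodMk, horoball, Set.mem_ofPred_eq]

theorem disjoint_horoball_iff_disjoint_tangentBall (hD : 0 ≤ D) (hE : 0 ≤ E) :
    Disjoint (horoball p D) (horoball q E) ↔ Disjoint (tangentBall p D) (tangentBall q E) := by
  rw [horoball_eq_preimage_tangentBall hD, horoball_eq_preimage_tangentBall hE,
    Set.disjoint_preimage_iff (toLp_surjective 2)]

end Horoball

/-- Proximity theorem for an abstract horoball family `(P, D)` in `ℝᵈ × ℝ`:
if `λ ∈ (1,2]`, `c ≥ 1`, `z ∈ ℝᵈ`, `R > 0` and some `p₀ ∈ P` satisfies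
`c·D(p₀)·R^λ ≥ c²·R^{2λ} + (‖z − p₀‖ + R)²`, then at most one `p ∈ P` satisfies
`‖p − z‖ ≤ R` and `c·R^λ ≤ D(p)`. -/
theorem proximityHoroballs {d : ℕ} (hd : 1 ≤ d)
    (P : Set (EuclideanSpace ℝ (Fin d))) (D : EuclideanSpace ℝ (Fin d) → ℝ)
    (hDpos : ∀ p ∈ P, 0 < D p)
    (hdisj : ∀ p ∈ P, ∀ p' ∈ P, p ≠ p' →
      Disjoint (horoball p (D p)) (horoball p' (D p')))
    (lam c : ℝ) (z : EuclideanSpace ℝ (Fin d)) (R : ℝ)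
    (hlam : lam ∈ Set.Ioc (1 : ℝ) 2) (hc : 1 ≤ c) (hR : 0 < R)
    (h : ∃ p₀ ∈ P, c * D p₀ * R ^ lam ≥ c ^ 2 * R ^ (2 * lam) + (‖z - p₀‖ + R) ^ 2) :
    {p ∈ P | ‖p - z‖ ≤ R ∧ c * R ^ lam ≤ D p}.Subsingleton := by
  obtain ⟨p₀, hp₀, h⟩ := h
  have hsq : 0 < c ^ 2 * R ^ (2 * lam) := by positivity
  have hdisj' : P.PairwiseDisjoint fun p => tangentBall p (D p) := fun p hp q hq hpq =>
    (disjoint_horoball_iff_disjoint_tangentBall (hDpos p hp).le (hDpos q hq).le).mp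
      (hdisj p hp q hq hpq)
  exact Set.subsingleton_singleton.anti <|
    proximityHoroballs_general hdisj' hp₀ (t := c * R ^ lam) (by positivity) (by linarith)
end
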